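/- arXiv:1601.05525 — 2 statements merged into one kernel-verified Lean document; each statement's English description precedes it below -/
import Mathlib

section
/- (Ando's inequality.) Let A and B be n×n complex positive semidefinite matrices and let t ∈ [0,1]. Then for every j = 1, …, n, λ_j((1−t)A + tB) ≥ σ_j(A^{1−t} B^{t}). -/
/-!
Powers are those of the continuous functional calculus, and order is the Loewner order.

Both sides are symmetric under exchanging `(A, 1 - t)` and `(B, t)`, since `ab` and `ba` have the
same singular values for Hermitian `a`, `b` (`singDesc_swap`); so `t ≤ 1/2` may be assumed. Then
`B ↦ B ^ (2t)` is operator monotone, so replacing `B` by `B + ε` does not decrease the singular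
values, and `B` may be taken positive definite (`ando_half`).

The main estimate is `ando_core`. Let `l` be the `j`-th singular value of `M = A ^ (1-t) * B ^ t`,
and let the columns of `Y` be eigenvectors of `MᴴM` with eigenvalues at least `l²`, so that
`l² YYᴴ ≤ MᴴM` (`exists_isometry_of_le_eigDesc`). Choose an orthonormal basis `V` of
`B⁻ᵗ (range Y)` in which the compression `VᴴBV = diag β` is diagonal, and put `e = (1 + r²) β` for a
small `r > 0`.

* Since `B ≤ V diag(e) Vᴴ + μ (1 - VVᴴ)` for a large `μ` (`le_pinching`), the Loewner–Heinz
  inequality with exponent `2t ≤ 1` gives `Vᴴ B^{2t} V ≤ diag(e^{2t})`.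
* Dualizing, and using `l² YYᴴ ≤ MᴴM`, gives `l² V diag(e^{-2t}) Vᴴ ≤ A^{2(1-t)}`.
* Loewner–Heinz with exponent `1 / (2(1-t)) ≤ 1` gives
  `diag((l² e^{-2t})^{1/(2(1-t))}) ≤ VᴴAV`.
* The scalar weighted AM–GM inequality then yields `l ≤ Vᴴ ((1-t) A + t (1+r²) B) V`.

By the Courant–Fischer principle (`le_eigDesc_of_isometry`) the `j`-th eigenvalue of
`(1-t) A + t (1+r²) B` is at least `l`; finally `r` and `ε` tend to `0`.
-/

open Matrix
open scoped Classical ComplexOrder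

/-- `eigDesc A j` is the `j`-th largest eigenvalue (1-based) of the Hermitian matrix `A`. -/
noncomputable def eigDesc {m : Type*} [Fintype m] [DecidableEq m] (A : Matrix m m ℂ) (j : ℕ) : ℝ :=
  if h : A.IsHermitian then
    ((Finset.univ.val.map h.eigenvalues).sort (· ≤ ·)).getD (Fintype.card m - j) 0
  else 0

/-- `singDesc M j` is the `j`-th largest singular value (1-based) of `M`, i.e. the square root
of the `j`-th largest eigenvalue of `Mᴴ * M`. -/
noncomputable def singDesc {m : Type*} [Fintype m] [DecidableEq m] (M : Matrix m m ℂ) (j : ℕ) : ℝ :=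
  Real.sqrt (eigDesc (Mᴴ * M) j)

/-- `matPow A s` is the power `A ^ s` of a positive semidefinite matrix `A`, defined via the
spectral decomposition of `A` (junk value `0` if `A` is not positive semidefinite). -/
noncomputable def matPow {m : Type*} [Fintype m] [DecidableEq m] (A : Matrix m m ℂ) (s : ℝ) :
    Matrix m m ℂ :=
  if h : A.PosSemidef then
    (h.1.eigenvectorUnitary : Matrix m m ℂ) *
      Matrix.diagonal (fun i => ((h.1.eigenvalues i ^ s : ℝ) : ℂ)) *
      (h.1.eigenvectorUnitary : Matrix m m ℂ)ᴴ
  else 0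

/-! ### Powers of matrices diagonal along an isometry -/

open scoped MatrixOrder Matrix.Norms.L2Operator

/-- The complex diagonal matrix with real diagonal `d`. -/
noncomputable def dg {κ : Type*} [DecidableEq κ] (d : κ → ℝ) : Matrix κ κ ℂ :=
  Matrix.diagonal (fun i => (d i : ℂ))

section Powers

variable {m κ : Type*} [Fintype m] [DecidableEq m] [Fintype κ] [DecidableEq κ]

lemma conjTranspose_dg (d : κ → ℝ) : (dg d)ᴴ = dg d := by
  simp [dg, diagonal_conjTranspose, Pi.star_def]

lemma dg_mul_dg (d e : κ → ℝ) : dg d * dg e = dg (fun i => d i * e i) := by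
  simp [dg]

lemma dg_le_dg {d e : κ → ℝ} (h : ∀ i, d i ≤ e i) : dg d ≤ dg e := by
  rw [Matrix.le_iff, dg, dg, Matrix.diagonal_sub, posSemidef_diagonal_iff]
  intro i
  rw [← Complex.ofReal_sub]
  exact_mod_cast sub_nonneg.2 (h i)

lemma dg_const (c : ℝ) : dg (fun _ : κ => c) = c • (1 : Matrix κ κ ℂ) := by
  ext i j
  by_cases h : i = j <;> simp [dg, h]

lemma dg_nonneg {d : κ → ℝ} (h : ∀ i, 0 ≤ d i) : 0 ≤ dg d := by
  simpa [dg_const] using dg_le_dg (d := fun _ => 0) h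

lemma conj_le_conj {X Y : Matrix m m ℂ} (h : X ≤ Y) (V : Matrix m κ ℂ) :
    Vᴴ * X * V ≤ Vᴴ * Y * V := by
  rw [Matrix.le_iff] at *
  simpa [Matrix.mul_sub, Matrix.sub_mul] using h.conjTranspose_mul_mul_same V

lemma conj_le_conj_right {X Y : Matrix κ κ ℂ} (h : X ≤ Y) (V : Matrix m κ ℂ) :
    V * X * Vᴴ ≤ V * Y * Vᴴ := by
  simpa using conj_le_conj h Vᴴ

lemma smul_le_smul_mat {X Y : Matrix m m ℂ} (h : X ≤ Y) {c : ℝ} (hc : 0 ≤ c) :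
    c • X ≤ c • Y := by
  rw [Matrix.le_iff] at *
  rw [← smul_sub]
  exact h.smul hc

lemma spectral_dg {H : Matrix m m ℂ} (h : H.IsHermitian) :
    H = (h.eigenvectorUnitary : Matrix m m ℂ) * dg h.eigenvalues *
      (h.eigenvectorUnitary : Matrix m m ℂ)ᴴ := by
  conv_lhs => rw [h.spectral_theorem, Unitary.conjStarAlgAut_apply]
  rfl

lemma unitary_mul_conjTranspose {H : Matrix m m ℂ} (h : H.IsHermitian) :
    (h.eigenvectorUnitary : Matrix m m ℂ) * (h.eigenvectorUnitary : Matrix m m ℂ)ᴴ = 1 :=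
  Unitary.coe_mul_star_self h.eigenvectorUnitary

lemma unitary_conjTranspose_mul {H : Matrix m m ℂ} (h : H.IsHermitian) :
    (h.eigenvectorUnitary : Matrix m m ℂ)ᴴ * (h.eigenvectorUnitary : Matrix m m ℂ) = 1 :=
  Unitary.coe_star_mul_self h.eigenvectorUnitary

lemma matPow_eq_rpow {A : Matrix m m ℂ} (hA : A.PosSemidef) (s : ℝ) : matPow A s = A ^ s := by
  rw [CFC.rpow_eq_cfc_real (Matrix.nonneg_iff_posSemidef.2 hA), hA.1.cfc_eq, IsHermitian.cfc,
    Unitary.conjStarAlgAut_apply, matPow, dif_pos hA]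
  rfl

lemma rpow_mul_self {A : Matrix m m ℂ} (hA : A.PosSemidef) {s : ℝ} (hs : 0 ≤ s) :
    A ^ s * A ^ s = A ^ (s * 2) := by
  rw [← CFC.rpow_rpow_of_exponent_nonneg A s 2 hs (by norm_num)
    (Matrix.nonneg_iff_posSemidef.2 hA)]
  have := CFC.rpow_natCast (A ^ s) 2 CFC.rpow_nonneg
  rw [Nat.cast_ofNat] at this
  rw [this, pow_two]

lemma rpow_isHermitian (A : Matrix m m ℂ) (s : ℝ) : (A ^ s).IsHermitian :=
  (Matrix.nonneg_iff_posSemidef.1 (CFC.rpow_nonneg (a := A) (y := s))).1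

/-- A real polynomial acts entrywise on a matrix that is diagonal on the range of the isometry `V`
and scalar on its orthogonal complement. -/
lemma aeval_isometry (V : Matrix m κ ℂ) (hV : Vᴴ * V = 1) (d : κ → ℝ) (c : ℝ)
    (p : Polynomial ℝ) :
    Polynomial.aeval (V * dg d * Vᴴ + c • (1 - V * Vᴴ)) p =
      V * dg (fun i => p.eval (d i)) * Vᴴ + p.eval c • (1 - V * Vᴴ) := by
  have h1 : Vᴴ * (1 - V * Vᴴ) = 0 := by
    rw [Matrix.mul_sub, ← Matrix.mul_assoc, hV]; simp
  have h2 : (1 - V * Vᴴ) * V = 0 := by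
    rw [Matrix.sub_mul, Matrix.mul_assoc, hV]; simp
  have h3 : (1 - V * Vᴴ) * (1 - V * Vᴴ) = 1 - V * Vᴴ := by
    rw [Matrix.sub_mul, Matrix.mul_assoc V, h1]; simp
  have hmul : ∀ (d e : κ → ℝ) (a b : ℝ),
      (V * dg d * Vᴴ + a • (1 - V * Vᴴ)) * (V * dg e * Vᴴ + b • (1 - V * Vᴴ)) =
      V * dg (fun i => d i * e i) * Vᴴ + (a * b) • (1 - V * Vᴴ) := by
    intro d e a b
    have e1 : (V * dg d * Vᴴ) * (V * dg e * Vᴴ) = V * dg (fun i => d i * e i) * Vᴴ := by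
      rw [← dg_mul_dg]
      calc _ = V * dg d * (Vᴴ * V) * dg e * Vᴴ := by simp only [Matrix.mul_assoc]
        _ = _ := by rw [hV]; simp only [Matrix.mul_assoc, Matrix.one_mul]
    have e2 : (V * dg d * Vᴴ) * (1 - V * Vᴴ) = 0 := by rw [Matrix.mul_assoc, h1]; simp
    have e3 : (1 - V * Vᴴ) * (V * dg e * Vᴴ) = 0 := by
      rw [Matrix.mul_assoc V, ← Matrix.mul_assoc _ V, h2]; simp
    rw [Matrix.add_mul, Matrix.mul_add, Matrix.mul_add, e1, Matrix.mul_smul, e2, Matrix.smul_mul,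
      e3, Matrix.smul_mul, Matrix.mul_smul, h3, smul_smul]
    simp
  induction p using Polynomial.induction_on' with
  | add p q hp hq =>
    have : dg (fun i => p.eval (d i) + q.eval (d i)) =
        dg (fun i => p.eval (d i)) + dg (fun i => q.eval (d i)) := by simp [dg]
    simp only [map_add, hp, hq, Polynomial.eval_add, this, Matrix.mul_add, Matrix.add_mul, add_smul]
    abel
  | monomial k a =>
    have hpow : (V * dg d * Vᴴ + c • (1 - V * Vᴴ)) ^ k =
        V * dg (fun i => d i ^ k) * Vᴴ + c ^ k • (1 - V * Vᴴ) := by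
      induction k with
      | zero => simp [dg_const]
      | succ k ih => rw [pow_succ, ih, hmul]; simp only [pow_succ]
    have hs : dg (fun i => a * d i ^ k) = a • dg (fun i => d i ^ k) := by
      ext i j
      by_cases h : i = j <;> simp [dg, h]
    simp only [Polynomial.aeval_monomial, Polynomial.eval_monomial, hpow, hs, Matrix.mul_smul,
      Matrix.smul_mul, ← Algebra.smul_def, smul_add, smul_smul]

/-- Interpolating the power function on the relevant finite set of reals by a polynomial reduces
the real powers of such a matrix to `aeval_isometry`. -/
lemma rpow_isometry (V : Matrix m κ ℂ) (hV : Vᴴ * V = 1) {d : κ → ℝ} (hd : ∀ i, 0 ≤ d i)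
    {c : ℝ} (hc : 0 ≤ c) (s : ℝ) :
    (V * dg d * Vᴴ + c • (1 - V * Vᴴ)) ^ s =
      V * dg (fun i => d i ^ s) * Vᴴ + c ^ s • (1 - V * Vᴴ) := by
  set K := V * dg d * Vᴴ + c • (1 - V * Vᴴ) with hK
  have hp : 0 ≤ 1 - V * Vᴴ := by
    have h3 : (1 - V * Vᴴ)ᴴ * (1 - V * Vᴴ) = 1 - V * Vᴴ := by
      have h1 : Vᴴ * (1 - V * Vᴴ) = 0 := by
        rw [Matrix.mul_sub, ← Matrix.mul_assoc, hV]; simp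
      simp only [conjTranspose_sub, conjTranspose_one, conjTranspose_mul,
        conjTranspose_conjTranspose]
      rw [Matrix.sub_mul, Matrix.mul_assoc V, h1]; simp
    rw [← h3]
    exact Matrix.nonneg_iff_posSemidef.2 (posSemidef_conjTranspose_mul_self _)
  have hK0 : 0 ≤ K := by
    refine add_nonneg ?_ ?_
    · simpa using conj_le_conj_right (dg_nonneg hd) V
    · simpa using smul_le_smul_mat hp hc
  have hKs : IsSelfAdjoint K := (Matrix.nonneg_iff_posSemidef.1 hK0).1
  let S : Finset ℝ := (Matrix.finite_real_spectrum (A := K)).toFinset ∪ Finset.univ.image d ∪ {c}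
  let p : Polynomial ℝ := Lagrange.interpolate S id (fun x => x ^ s)
  have hpS : ∀ x ∈ S, p.eval x = x ^ s := fun x hx =>
    Lagrange.eval_interpolate_at_node (v := id) (fun x : ℝ => x ^ s) (Set.injOn_id _) hx
  rw [CFC.rpow_eq_cfc_real hK0, cfc_congr (g := p.eval) (fun x hx => (hpS x (by simp [S, hx])).symm),
    cfc_polynomial p K hKs, hK, aeval_isometry V hV, hpS c (by simp [S])]
  congr 3
  exact congrArg dg (funext fun i => hpS _ (by simp [S]))

lemma rpow_isometry' (V : Matrix m κ ℂ) (hV : Vᴴ * V = 1) {d : κ → ℝ} (hd : ∀ i, 0 ≤ d i)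
    {s : ℝ} (hs : 0 < s) :
    (V * dg d * Vᴴ) ^ s = V * dg (fun i => d i ^ s) * Vᴴ := by
  simpa [Real.zero_rpow hs.ne'] using rpow_isometry V hV hd le_rfl s

lemma rpow_mono {X Y : Matrix m m ℂ} (h : X ≤ Y) {s : ℝ} (h0 : 0 ≤ s) (h1 : s ≤ 1) :
    X ^ s ≤ Y ^ s :=
  CFC.rpow_le_rpow ⟨h0, h1⟩ h

end Powers

/-! ### Variational characterization of eigenvalues -/

section Variational

/-- An entry of a sorted list is at least `c` exactly when enough entries of the list are. -/
lemma le_sort_getD_iff {m : Type*} [Fintype m] (f : m → ℝ) (c : ℝ) {j : ℕ} (hj : 1 ≤ j)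
    (hjm : j ≤ Fintype.card m) :
    c ≤ ((Finset.univ.val.map f).sort (· ≤ ·)).getD (Fintype.card m - j) 0 ↔
      j ≤ Fintype.card {i // c ≤ f i} := by
  set L := (Finset.univ.val.map f).sort (· ≤ ·) with hL
  have hlen : L.length = Fintype.card m := by simp [hL]
  have hsort : L.Pairwise (· ≤ ·) := Multiset.pairwise_sort _ _
  have hcount : Fintype.card {i // c ≤ f i} = L.countP (fun x => decide (c ≤ x)) := by
    rw [← Multiset.coe_countP, hL, Multiset.sort_eq, Multiset.countP_map, Fintype.card_subtype]
    rfl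
  have hk : Fintype.card m - j < L.length := by omega
  rw [hcount, List.getD_eq_getElem _ _ hk]
  constructor
  · intro h
    have h1 : (L.drop (Fintype.card m - j)).countP (fun x => decide (c ≤ x)) =
        (L.drop (Fintype.card m - j)).length := by
      rw [List.countP_eq_length]
      intro x hx
      obtain ⟨i, hi, rfl⟩ := List.getElem_of_mem hx
      rw [List.getElem_drop]
      simp only [decide_eq_true_eq]
      exact h.trans (hsort.sortedLE.getElem_le_getElem_of_le (by omega))
    have h2 := (List.drop_sublist (Fintype.card m - j) L).countP_le
      (p := fun x => decide (c ≤ x))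
    rw [h1, List.length_drop] at h2
    omega
  · intro h
    by_contra hlt
    have h1 : (L.take (Fintype.card m - j + 1)).countP (fun x => decide (c ≤ x)) = 0 := by
      rw [List.countP_eq_zero]
      intro x hx
      obtain ⟨i, hi, rfl⟩ := List.getElem_of_mem hx
      rw [List.getElem_take]
      simp only [decide_eq_true_eq]
      rw [List.length_take] at hi
      exact fun h' => hlt (h'.trans (hsort.sortedLE.getElem_le_getElem_of_le (by omega)))
    have h2 : L.countP (fun x => decide (c ≤ x)) =
        (L.take (Fintype.card m - j + 1)).countP (fun x => decide (c ≤ x)) +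
        (L.drop (Fintype.card m - j + 1)).countP (fun x => decide (c ≤ x)) := by
      rw [← List.countP_append, List.take_append_drop]
    have h3 := List.countP_le_length (p := fun x => decide (c ≤ x))
      (l := L.drop (Fintype.card m - j + 1))
    rw [List.length_drop] at h3
    omega

variable {m κ : Type*} [Fintype m] [DecidableEq m] [Fintype κ] [DecidableEq κ]

lemma le_eigDesc_iff {H : Matrix m m ℂ} (h : H.IsHermitian) (c : ℝ) {j : ℕ} (hj : 1 ≤ j)
    (hjm : j ≤ Fintype.card m) :
    c ≤ eigDesc H j ↔ j ≤ Fintype.card {i // c ≤ h.eigenvalues i} := by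
  rw [eigDesc, dif_pos h, le_sort_getD_iff _ _ hj hjm]

lemma eigDesc_congr_charpoly {H K : Matrix m m ℂ} (hH : H.IsHermitian) (hK : K.IsHermitian)
    (h : H.charpoly = K.charpoly) (j : ℕ) : eigDesc H j = eigDesc K j := by
  rw [eigDesc, eigDesc, dif_pos hH, dif_pos hK, (hH.eigenvalues_eq_eigenvalues_iff hK).2 h]

lemma singDesc_swap {a b : Matrix m m ℂ} (ha : a.IsHermitian) (hb : b.IsHermitian) (j : ℕ) :
    singDesc (a * b) j = singDesc (b * a) j := by
  rw [singDesc, singDesc]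
  congr 1
  refine eigDesc_congr_charpoly (isHermitian_conjTranspose_mul_self _)
    (isHermitian_conjTranspose_mul_self _) ?_ j
  rw [Matrix.charpoly_mul_comm]
  simp only [conjTranspose_mul, ha.eq, hb.eq]

/-- If the `j`-th eigenvalue of `H` is at least `c`, then `H` dominates `c` on a subspace of dimension
at least `j`. The columns of `Y` are the eigenvectors of `H` whose eigenvalue is at least `c`. -/
lemma exists_isometry_of_le_eigDesc {m : Type} [Fintype m] [DecidableEq m]
    {H : Matrix m m ℂ} (h : H.IsHermitian) {c : ℝ} {j : ℕ}
    (hj : 1 ≤ j) (hjm : j ≤ Fintype.card m) (hc : c ≤ eigDesc H j) :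
    ∃ (κ : Type) (_ : Fintype κ) (_ : DecidableEq κ) (Y : Matrix m κ ℂ),
      Yᴴ * Y = 1 ∧ j ≤ Fintype.card κ ∧ c • (1 : Matrix κ κ ℂ) ≤ Yᴴ * H * Y ∧
      (H.PosSemidef → c • (Y * Yᴴ) ≤ H) := by
  rw [le_eigDesc_iff h c hj hjm] at hc
  set U := (h.eigenvectorUnitary : Matrix m m ℂ) with hU
  have hUU : Uᴴ * U = 1 := unitary_conjTranspose_mul h
  let J : Matrix m {i // c ≤ h.eigenvalues i} ℂ := (1 : Matrix m m ℂ).submatrix id Subtype.val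
  have hJ : ∀ d : m → ℝ, Jᴴ * dg d * J = dg (fun i => d i.1) := by
    intro d
    ext i k
    by_cases hik : i = k
    · subst hik; simp [J, dg, Matrix.mul_apply, Matrix.one_apply, diagonal_apply]
    · have : i.1 ≠ k.1 := fun h => hik (Subtype.ext h)
      simp [J, dg, Matrix.mul_apply, Matrix.one_apply, diagonal_apply, hik, this]
  have hJJ : J * Jᴴ = dg (fun i => if c ≤ h.eigenvalues i then (1 : ℝ) else 0) := by
    ext i k
    simp only [J, dg, Matrix.mul_apply, submatrix_apply, conjTranspose_apply, id,
      Matrix.one_apply, diagonal_apply]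
    by_cases hi : c ≤ h.eigenvalues i
    · rw [Finset.sum_eq_single (⟨i, hi⟩ : {i // c ≤ h.eigenvalues i})]
      · by_cases hik : i = k
        · simp [hik, hik ▸ hi]
        · simp [hik, Ne.symm hik]
      · intro b _ hb
        have : i ≠ b.1 := fun h' => hb (Subtype.ext h'.symm)
        simp [this]
      · simp
    · rw [Finset.sum_eq_zero]
      · simp [hi]
      · intro b _
        have : i ≠ b.1 := fun h' => hi (h' ▸ b.2)
        simp [this]
  have hYHY : (U * J)ᴴ * H * (U * J) = dg (fun i => h.eigenvalues i.1) := by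
    rw [← hJ h.eigenvalues, conjTranspose_mul]
    calc _ = Jᴴ * Uᴴ * (U * dg h.eigenvalues * Uᴴ) * (U * J) := by rw [hU, ← spectral_dg h]
      _ = Jᴴ * ((Uᴴ * U) * dg h.eigenvalues * (Uᴴ * U)) * J := by simp only [Matrix.mul_assoc]
      _ = _ := by rw [hUU]; simp only [Matrix.one_mul, Matrix.mul_one]
  refine ⟨_, inferInstance, inferInstance, U * J, ?_, hc, ?_, ?_⟩
  · have := hJ (fun _ => 1)
    simp only [dg_const, one_smul, Matrix.mul_one] at this
    rw [conjTranspose_mul, Matrix.mul_assoc, ← Matrix.mul_assoc _ U, hUU, Matrix.one_mul, this]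
  · rw [hYHY, ← dg_const]
    exact dg_le_dg fun i => i.2
  · intro hp
    have e : c • (U * J * (U * J)ᴴ) =
        U * dg (fun i => if c ≤ h.eigenvalues i then c else 0) * Uᴴ := by
      have : dg (fun i => if c ≤ h.eigenvalues i then c else 0) = c • (J * Jᴴ) := by
        rw [hJJ]
        ext i k
        by_cases hik : i = k
        · subst hik
          by_cases hi : c ≤ h.eigenvalues i <;> simp [dg, hi]
        · simp [dg, hik]
      rw [this, conjTranspose_mul]
      simp only [Matrix.mul_smul, Matrix.smul_mul, Matrix.mul_assoc]
    rw [e]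
    conv_rhs => rw [spectral_dg h]
    refine conj_le_conj_right (dg_le_dg fun i => ?_) U
    split_ifs with hi
    · exact hi
    · exact hp.eigenvalues_nonneg i

/-- The half of the Courant–Fischer principle bounding eigenvalues from below: if the
compression of `H` to a subspace of dimension at least `j` dominates `c`, then the `j`-th
eigenvalue is at least `c`. The subspace meets the span of the eigenvectors with eigenvalue below `c`
nontrivially as soon as fewer than `j` eigenvalues are at least `c`. -/
lemma le_eigDesc_of_isometry {H : Matrix m m ℂ} (h : H.IsHermitian) {c : ℝ} {j : ℕ}
    (hj : 1 ≤ j) (hjm : j ≤ Fintype.card m) (V : Matrix m κ ℂ) (hV : Vᴴ * V = 1)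
    (hjκ : j ≤ Fintype.card κ) (hc : c • (1 : Matrix κ κ ℂ) ≤ Vᴴ * H * V) :
    c ≤ eigDesc H j := by
  rw [le_eigDesc_iff h c hj hjm]
  by_contra! hlt
  set U := (h.eigenvectorUnitary : Matrix m m ℂ) with hU
  have hUU : U * Uᴴ = 1 := unitary_mul_conjTranspose h
  let W : Matrix m κ ℂ := Uᴴ * V
  have hW : Wᴴ * W = 1 := by
    simp only [W, conjTranspose_mul, conjTranspose_conjTranspose]
    rw [Matrix.mul_assoc, ← Matrix.mul_assoc U, hUU, Matrix.one_mul, hV]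
  have hWH : Vᴴ * H * V = Wᴴ * dg h.eigenvalues * W := by
    conv_lhs => rw [spectral_dg h]
    simp only [W, ← hU, conjTranspose_mul, conjTranspose_conjTranspose, Matrix.mul_assoc]
  have hker : ∃ w : κ → ℂ, w ≠ 0 ∧ ∀ i, c ≤ h.eigenvalues i → (W *ᵥ w) i = 0 := by
    have := LinearMap.ker_ne_bot_of_finrank_lt
      (f := Matrix.mulVecLin (W.submatrix (Subtype.val : {i // c ≤ h.eigenvalues i} → m) id))
      (by simpa using hlt.trans_le hjκ)
    obtain ⟨w, hw, hw0⟩ := (Submodule.ne_bot_iff _).1 this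
    exact ⟨w, hw0, fun i hi => congrFun (LinearMap.mem_ker.1 hw) ⟨i, hi⟩⟩
  obtain ⟨w, hw0, hw⟩ := hker
  set y := W *ᵥ w with hy
  -- Pulling `c ≤ Vᴴ H V` back along `w` gives a real inequality that fails termwise.
  have hdiff : Vᴴ * H * V - c • (1 : Matrix κ κ ℂ) =
      Wᴴ * dg (fun i => h.eigenvalues i - c) * W := by
    have : dg (fun i => h.eigenvalues i - c) = dg h.eigenvalues - c • (1 : Matrix m m ℂ) := by
      rw [← dg_const]; simp [dg]
    rw [hWH, this, Matrix.mul_sub, Matrix.sub_mul, Matrix.mul_smul, Matrix.smul_mul,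
      Matrix.mul_one, hW]
  have hq := (Matrix.le_iff.1 hc).re_dotProduct_nonneg w
  rw [hdiff] at hq
  have hq2 : star w ⬝ᵥ ((Wᴴ * dg (fun i => h.eigenvalues i - c) * W) *ᵥ w) =
      ∑ i, (((h.eigenvalues i - c) * Complex.normSq (y i) : ℝ) : ℂ) := by
    rw [← Matrix.mulVec_mulVec, ← Matrix.mulVec_mulVec, Matrix.dotProduct_mulVec,
      ← Matrix.star_mulVec, ← hy, dotProduct]
    refine Finset.sum_congr rfl fun i _ => ?_
    rw [dg, mulVec_diagonal, Complex.ofReal_mul, Complex.normSq_eq_conj_mul_self, Pi.star_apply,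
      RCLike.star_def]
    ring
  rw [hq2, ← Complex.ofReal_sum] at hq
  change 0 ≤ ∑ i, (h.eigenvalues i - c) * Complex.normSq (y i) at hq
  have hterm : ∀ i, (h.eigenvalues i - c) * Complex.normSq (y i) ≤ 0 := by
    intro i
    by_cases hi : c ≤ h.eigenvalues i
    · simp [hw i hi]
    · exact mul_nonpos_of_nonpos_of_nonneg (by linarith) (Complex.normSq_nonneg _)
  have hzero := (Finset.sum_eq_zero_iff_of_nonpos (fun i _ => hterm i)).1
    (le_antisymm (Finset.sum_nonpos fun i _ => hterm i) hq)
  have hy0 : y = 0 := by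
    funext i
    by_cases hi : c ≤ h.eigenvalues i
    · exact hw i hi
    · rcases mul_eq_zero.1 (hzero i (Finset.mem_univ i)) with h' | h'
      · linarith
      · exact Complex.normSq_eq_zero.1 h'
  apply hw0
  rw [← Matrix.one_mulVec w, ← hW, ← Matrix.mulVec_mulVec, ← hy, hy0, Matrix.mulVec_zero]

end Variational

/-! ### The estimate for positive definite `B` -/

section Core

variable {m κ : Type*} [Fintype m] [DecidableEq m] [Fintype κ] [DecidableEq κ]

/-- The range of an injective `Z` has an orthonormal basis, the columns of `Z * R`, in which the
compression of `B` is diagonal. -/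
lemma exists_diagonalizing (Z : Matrix m κ ℂ) (hZ : (Zᴴ * Z).PosDef) {B : Matrix m m ℂ}
    (hB : B.IsHermitian) :
    ∃ (R : Matrix κ κ ℂ) (β : κ → ℝ), (Z * R)ᴴ * (Z * R) = 1 ∧ (Z * R)ᴴ * B * (Z * R) = dg β := by
  set X := (hZ.1.eigenvectorUnitary : Matrix κ κ ℂ) with hX
  have hXX : Xᴴ * X = 1 := unitary_conjTranspose_mul hZ.1
  let g := hZ.1.eigenvalues
  have hg : ∀ i, 0 < g i := hZ.eigenvalues_pos
  let D : Matrix κ κ ℂ := dg (fun i => (Real.sqrt (g i))⁻¹)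
  -- `W = Z (ZᴴZ)^{-1/2}`, up to a unitary factor, has orthonormal columns.
  let W := Z * (X * D)
  have hW : Wᴴ * W = 1 := by
    have : Wᴴ * W = D * ((Xᴴ * X) * dg g * (Xᴴ * X)) * D := by
      have h1 : Wᴴ * W = D * Xᴴ * (Zᴴ * Z) * X * D := by
        simp only [W, D, conjTranspose_mul, conjTranspose_dg, Matrix.mul_assoc]
      rw [h1]
      calc _ = D * Xᴴ * (X * dg g * Xᴴ) * X * D := by rw [hX, ← spectral_dg hZ.1]
        _ = _ := by simp only [Matrix.mul_assoc]
    rw [this, hXX, Matrix.one_mul, Matrix.mul_one, dg_mul_dg, dg_mul_dg, ← one_smul ℝ (1 : Matrix κ κ ℂ),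
      ← dg_const]
    congr 1
    funext i
    have h0 : Real.sqrt (g i) ≠ 0 := (Real.sqrt_pos.2 (hg i)).ne'
    field_simp
    exact (Real.sq_sqrt (hg i).le).symm
  have hC : (Wᴴ * B * W).IsHermitian := isHermitian_conjTranspose_mul_mul W hB
  set T := (hC.eigenvectorUnitary : Matrix κ κ ℂ) with hT
  have hTT : Tᴴ * T = 1 := unitary_conjTranspose_mul hC
  refine ⟨X * D * T, hC.eigenvalues, ?_, ?_⟩
  · have : Z * (X * D * T) = W * T := by simp only [W, Matrix.mul_assoc]
    rw [this, conjTranspose_mul, Matrix.mul_assoc, ← Matrix.mul_assoc _ W, hW, Matrix.one_mul, hTT]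
  · have : Z * (X * D * T) = W * T := by simp only [W, Matrix.mul_assoc]
    rw [this, conjTranspose_mul]
    calc _ = Tᴴ * (Wᴴ * B * W) * T := by simp only [Matrix.mul_assoc]
      _ = Tᴴ * (T * dg hC.eigenvalues * Tᴴ) * T := by rw [hT, ← spectral_dg hC]
      _ = (Tᴴ * T) * dg hC.eigenvalues * (Tᴴ * T) := by simp only [Matrix.mul_assoc]
      _ = _ := by rw [hTT, Matrix.one_mul, Matrix.mul_one]

/-- Off-diagonal blocks of a positive matrix are absorbed by slightly enlarging one diagonal block
and greatly enlarging the other. -/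
lemma le_pinching {B Q : Matrix m m ℂ} (hB : 0 ≤ B) (hQ : Qᴴ = Q) (hQQ : Q * Q = Q) {b₀ : ℝ}
    (hb : B ≤ b₀ • (1 : Matrix m m ℂ)) {r : ℝ} (hr : 0 < r) :
    B ≤ (1 + r ^ 2) • (Q * B * Q) + ((1 + (r ^ 2)⁻¹) * b₀) • (1 - Q) := by
  set P := 1 - Q with hP
  have hPP : P * P = P := by simp [hP, Matrix.mul_sub, Matrix.sub_mul, hQQ]
  have hPh : Pᴴ = P := by simp [hP, hQ]
  have h1 : 0 ≤ (r • Q - r⁻¹ • P) * B * (r • Q - r⁻¹ • P) := by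
    have := conj_le_conj hB (r • Q - r⁻¹ • P)
    simpa [hQ, hPh] using this
  have h2 : P * B * P ≤ b₀ • P := by
    have := conj_le_conj hb P
    simpa [hPh, hPP] using this
  have h3 := smul_le_smul_mat h2 (c := 1 + (r ^ 2)⁻¹) (by positivity)
  have hB4 : B = Q * B * Q + Q * B * P + P * B * Q + P * B * P := by
    simp only [hP]; noncomm_ring
  have h4 : (r • Q - r⁻¹ • P) * B * (r • Q - r⁻¹ • P) =
      (1 + r ^ 2) • (Q * B * Q) + (1 + (r ^ 2)⁻¹) • (P * B * P) -
      (Q * B * Q + Q * B * P + P * B * Q + P * B * P) := by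
    have hr' := hr.ne'
    simp only [Matrix.mul_sub, Matrix.sub_mul, Matrix.mul_smul, Matrix.smul_mul, smul_sub,
      smul_smul, inv_mul_cancel₀ hr', mul_inv_cancel₀ hr', one_smul, add_smul, ← pow_two, inv_pow]
    abel
  rw [h4, ← hB4, sub_nonneg] at h1
  refine h1.trans ?_
  rw [mul_smul]
  exact add_le_add le_rfl h3

lemma mul_conjTranspose_le_one {N : Matrix κ κ ℂ} (h : Nᴴ * N ≤ 1) : N * Nᴴ ≤ 1 := by
  -- `p = N Nᴴ` satisfies `p² ≤ p`, hence `0 ≤ (1 - p)² ≤ 1 - p`.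
  set p := N * Nᴴ with hp
  have hph : pᴴ = p := by simp [hp]
  have h1 : p * p ≤ p := by
    have := conj_le_conj_right h N
    simpa [hp, Matrix.mul_assoc] using this
  have h2 : 0 ≤ (1 - p) * (1 - p) := by
    have := Matrix.nonneg_iff_posSemidef.2 (posSemidef_conjTranspose_mul_self (1 - p))
    simpa [hph] using this
  have h3 : (1 - p) * (1 - p) = (p * p - p) + (1 - p) := by noncomm_ring
  rw [h3] at h2
  have h4 : p * p - p ≤ 0 := sub_nonpos.2 h1
  exact sub_nonneg.1 (h2.trans (add_le_of_nonpos_left h4))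

/-- Weighted AM–GM for the two numbers whose weighted geometric mean is `l`. -/
lemma scalar_young {l e t : ℝ} (hl : 0 ≤ l) (he : 0 < e) (ht0 : 0 ≤ t) (ht1 : t ≤ 1 / 2) :
    l ≤ (1 - t) * (l ^ 2 * e ^ (-(2 * t))) ^ (1 / (2 * (1 - t))) + t * e := by
  have h1 : 0 < 1 - t := by linarith
  have hx : 0 ≤ l ^ 2 * e ^ (-(2 * t)) := by positivity
  have h := Real.geom_mean_le_arith_mean2_weighted h1.le ht0
    (Real.rpow_nonneg hx (1 / (2 * (1 - t)))) he.le (by ring)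
  refine le_trans (le_of_eq ?_) h
  have e1 : 1 / (2 * (1 - t)) * (1 - t) = 1 / 2 := by field_simp
  have e2 : l ^ 2 * e ^ (-(2 * t)) = (l * e ^ (-t)) ^ 2 := by
    rw [mul_pow, ← Real.rpow_mul_natCast he.le]
    congr 2
    push_cast; ring
  rw [← Real.rpow_mul hx, e1, ← Real.sqrt_eq_rpow, e2, Real.sqrt_sq (by positivity), mul_assoc,
    ← Real.rpow_add he]
  simp

lemma exists_le_smul_one {B : Matrix m m ℂ} (hB : B.PosSemidef) :
    ∃ b₀ : ℝ, 0 < b₀ ∧ B ≤ b₀ • (1 : Matrix m m ℂ) := by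
  refine ⟨1 + ∑ i, hB.1.eigenvalues i, ?_, ?_⟩
  · have := Finset.sum_nonneg fun i (_ : i ∈ Finset.univ) => hB.eigenvalues_nonneg i
    linarith
  · have h : dg hB.1.eigenvalues ≤ dg (fun _ => 1 + ∑ i, hB.1.eigenvalues i) :=
      dg_le_dg fun i => by
        have := Finset.single_le_sum (fun i _ => hB.eigenvalues_nonneg i) (Finset.mem_univ i)
        linarith
    have := conj_le_conj_right h (hB.1.eigenvectorUnitary : Matrix m m ℂ)
    rwa [← spectral_dg hB.1, dg_const, Matrix.mul_smul, Matrix.smul_mul, Matrix.mul_one,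
      unitary_mul_conjTranspose] at this

/-- If `(AᵖBᵗ)ᴴ(AᵖBᵗ)`, with `p = 1 - t`, dominates `l² YYᴴ` for an isometry `Y`, then
`(1-t)A + tB`, up to the factor `1 + r²` on `B`, dominates `l` on a subspace of the same dimension,
namely `B⁻ᵗ (range Y)`. -/
lemma ando_core {A B : Matrix m m ℂ} (hA : A.PosSemidef) (hB : B.PosDef) {t : ℝ} (ht0 : 0 ≤ t)
    (ht1 : t ≤ 1 / 2) {r : ℝ} (hr : 0 < r) {l : ℝ} (hl : 0 ≤ l) (Y : Matrix m κ ℂ)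
    (hY : Yᴴ * Y = 1)
    (hYl : l ^ 2 • (Y * Yᴴ) ≤ (A ^ (1 - t) * B ^ t)ᴴ * (A ^ (1 - t) * B ^ t)) :
    ∃ V : Matrix m κ ℂ, Vᴴ * V = 1 ∧
      l • (1 : Matrix κ κ ℂ) ≤ Vᴴ * ((1 - t) • A + (t * (1 + r ^ 2)) • B) * V := by
  have h1t : 0 < 1 - t := by linarith
  set a := A ^ (1 - t) with ha
  set b := B ^ t with hb
  have hah : aᴴ = a := rpow_isHermitian A _
  have hbh : bᴴ = b := rpow_isHermitian B _
  have hbu : IsUnit b.det := (Matrix.isUnit_iff_isUnit_det _).1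
    (IsUnit.cfcRpow hB.isUnit t (Matrix.nonneg_iff_posSemidef.2 hB.posSemidef))
  have hbih : (b⁻¹)ᴴ = b⁻¹ := by rw [conjTranspose_nonsing_inv, hbh]
  have hbb : b * b = B ^ (t * 2) := rpow_mul_self hB.posSemidef ht0
  have haa : a * a = A ^ ((1 - t) * 2) := rpow_mul_self hA h1t.le
  have hZ : ((b⁻¹ * Y)ᴴ * (b⁻¹ * Y)).PosDef := by
    refine PosDef.conjTranspose_mul_self _ ?_
    refine Function.LeftInverse.injective (g := fun v => (Yᴴ * b) *ᵥ v) fun v => ?_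
    have : Yᴴ * b * (b⁻¹ * Y) = 1 := by
      rw [Matrix.mul_assoc, Matrix.mul_nonsing_inv_cancel_left _ _ hbu, hY]
    simp only [Matrix.mulVec_mulVec, this, Matrix.one_mulVec]
  obtain ⟨R, β, hV, hVB⟩ := exists_diagonalizing (b⁻¹ * Y) hZ hB.1
  set V := b⁻¹ * Y * R with hVdef
  have hbV : b * V = Y * R := by
    rw [hVdef, Matrix.mul_assoc, Matrix.mul_nonsing_inv_cancel_left _ _ hbu]
  have hVinj : Function.Injective V.mulVec :=
    Function.LeftInverse.injective (g := fun v => Vᴴ *ᵥ v) fun v => by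
      simp only [Matrix.mulVec_mulVec, hV, Matrix.one_mulVec]
  have hβ : ∀ i, 0 < β i := by
    intro i
    have := (hB.conjTranspose_mul_mul_same hVinj).diag_pos (i := i)
    rw [hVB] at this
    simpa [dg] using this
  let e : κ → ℝ := fun i => (1 + r ^ 2) * β i
  have he : ∀ i, 0 < e i := fun i => mul_pos (by positivity) (hβ i)
  obtain ⟨b₀, hb₀, hBb₀⟩ := exists_le_smul_one hB.posSemidef
  set μ := (1 + (r ^ 2)⁻¹) * b₀ with hμ
  have hμ0 : 0 ≤ μ := by positivity
  have h1 : B ≤ V * dg e * Vᴴ + μ • (1 - V * Vᴴ) := by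
    have hQQ : V * Vᴴ * (V * Vᴴ) = V * Vᴴ := by
      rw [Matrix.mul_assoc, ← Matrix.mul_assoc Vᴴ, hV, Matrix.one_mul]
    have := le_pinching (Q := V * Vᴴ) (Matrix.nonneg_iff_posSemidef.2 hB.posSemidef)
      (by simp) hQQ hBb₀ hr
    have h' : (1 + r ^ 2) • (V * Vᴴ * B * (V * Vᴴ)) = V * dg e * Vᴴ := by
      have : V * Vᴴ * B * (V * Vᴴ) = V * (Vᴴ * B * V) * Vᴴ := by simp only [Matrix.mul_assoc]
      have h'' : dg e = (1 + r ^ 2) • dg β := by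
        ext i k
        by_cases hik : i = k <;> simp [dg, e, hik]
      rw [this, hVB, h'', Matrix.mul_smul, Matrix.smul_mul]
    rwa [h'] at this
  have h2 : Vᴴ * (b * b) * V ≤ dg (fun i => e i ^ (t * 2)) := by
    have := conj_le_conj (rpow_mono h1 (s := t * 2) (by linarith) (by linarith)) V
    rw [rpow_isometry V hV (fun i => (he i).le) hμ0, ← hbb] at this
    have h' : Vᴴ * (V * dg (fun i => e i ^ (t * 2)) * Vᴴ + μ ^ (t * 2) • (1 - V * Vᴴ)) * V =
        dg (fun i => e i ^ (t * 2)) := by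
      have h'' : (1 - V * Vᴴ) * V = 0 := by
        rw [Matrix.sub_mul, Matrix.mul_assoc, hV]; simp
      rw [Matrix.mul_assoc, Matrix.add_mul, Matrix.smul_mul, h'', smul_zero, add_zero,
        Matrix.mul_assoc (V * _), hV, Matrix.mul_one, ← Matrix.mul_assoc, hV, Matrix.one_mul]
    rwa [h'] at this
  have h3 : Rᴴ * R ≤ dg (fun i => e i ^ (t * 2)) := by
    have : Vᴴ * (b * b) * V = Rᴴ * R := by
      calc _ = (b * V)ᴴ * (b * V) := by simp only [conjTranspose_mul, hbh, Matrix.mul_assoc]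
        _ = Rᴴ * (Yᴴ * Y) * R := by rw [hbV, conjTranspose_mul]; simp only [Matrix.mul_assoc]
        _ = _ := by rw [hY, Matrix.mul_one]
    rwa [this] at h2
  -- `N = R diag(e^{-t})` is a contraction by `h3`, hence so is `Nᴴ`.
  have h4 : R * dg (fun i => e i ^ (-(2 * t))) * Rᴴ ≤ 1 := by
    have hN : (R * dg (fun i => e i ^ (-t)))ᴴ * (R * dg (fun i => e i ^ (-t))) ≤ 1 := by
      have := conj_le_conj h3 (dg (fun i => e i ^ (-t)))
      rw [conjTranspose_dg, dg_mul_dg, dg_mul_dg] at this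
      have h' : (fun i => e i ^ (-t) * e i ^ (t * 2) * e i ^ (-t)) = fun _ => (1 : ℝ) := by
        funext i
        rw [← Real.rpow_add (he i), ← Real.rpow_add (he i)]
        ring_nf
        simp
      rw [h', dg_const, one_smul] at this
      simpa only [conjTranspose_mul, conjTranspose_dg, Matrix.mul_assoc] using this
    have := mul_conjTranspose_le_one hN
    have h' : (fun i => e i ^ (-(2 * t))) = fun i => e i ^ (-t) * e i ^ (-t) := by
      funext i
      rw [← Real.rpow_add (he i)]
      ring_nf
    rw [h', ← dg_mul_dg]
    simpa only [conjTranspose_mul, conjTranspose_dg, Matrix.mul_assoc] using this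
  have h5 : V * dg (fun i => l ^ 2 * e i ^ (-(2 * t))) * Vᴴ ≤ A ^ ((1 - t) * 2) := by
    have s1 := smul_le_smul_mat (conj_le_conj_right h4 (b⁻¹ * Y)) (sq_nonneg l)
    have s2 := conj_le_conj hYl b⁻¹
    have s3 : (b⁻¹)ᴴ * ((a * b)ᴴ * (a * b)) * b⁻¹ = a * a := by
      rw [hbih, conjTranspose_mul, hah, hbh]
      calc _ = (b⁻¹ * b) * (a * a) * (b * b⁻¹) := by simp only [Matrix.mul_assoc]
        _ = _ := by
          rw [Matrix.nonsing_inv_mul _ hbu, Matrix.mul_nonsing_inv _ hbu, Matrix.one_mul,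
            Matrix.mul_one]
    have s4 : l ^ 2 • (b⁻¹ * Y * (1 : Matrix κ κ ℂ) * (b⁻¹ * Y)ᴴ) = (b⁻¹)ᴴ * (l ^ 2 • (Y * Yᴴ)) * b⁻¹ := by
      simp only [conjTranspose_mul, hbih, Matrix.mul_smul, Matrix.smul_mul, Matrix.mul_one,
        Matrix.mul_assoc]
    have s5 : dg (fun i => l ^ 2 * e i ^ (-(2 * t))) = l ^ 2 • dg (fun i => e i ^ (-(2 * t))) := by
      ext i k
      by_cases hik : i = k <;> simp [dg, hik]
    have s6 : V * dg (fun i => l ^ 2 * e i ^ (-(2 * t))) * Vᴴ =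
        l ^ 2 • (b⁻¹ * Y * (R * dg (fun i => e i ^ (-(2 * t))) * Rᴴ) * (b⁻¹ * Y)ᴴ) := by
      rw [s5, hVdef]
      simp only [conjTranspose_mul, Matrix.mul_smul, Matrix.smul_mul, Matrix.mul_assoc]
    rw [s6, ← haa, ← s3]
    exact s1.trans (s4 ▸ s2)
  set w := 1 / (2 * (1 - t)) with hw
  have hw0 : 0 < w := by positivity
  have hw1 : w ≤ 1 := by
    rw [hw, div_le_one (by positivity)]
    linarith
  have h6 : V * dg (fun i => (l ^ 2 * e i ^ (-(2 * t))) ^ w) * Vᴴ ≤ A := by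
    have := rpow_mono h5 hw0.le hw1
    rw [rpow_isometry' V hV (fun i => mul_nonneg (sq_nonneg l) (Real.rpow_nonneg (he i).le _)) hw0,
      CFC.rpow_rpow_of_exponent_nonneg A _ _ (by linarith) hw0.le
        (Matrix.nonneg_iff_posSemidef.2 hA)] at this
    have h' : (1 - t) * 2 * w = 1 := by rw [hw]; field_simp
    rwa [h', CFC.rpow_one A (Matrix.nonneg_iff_posSemidef.2 hA)] at this
  have h7 : dg (fun i => (l ^ 2 * e i ^ (-(2 * t))) ^ w) ≤ Vᴴ * A * V := by
    have := conj_le_conj h6 V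
    have h' : Vᴴ * (V * dg (fun i => (l ^ 2 * e i ^ (-(2 * t))) ^ w) * Vᴴ) * V =
        (Vᴴ * V) * dg (fun i => (l ^ 2 * e i ^ (-(2 * t))) ^ w) * (Vᴴ * V) := by
      simp only [Matrix.mul_assoc]
    rwa [h', hV, Matrix.one_mul, Matrix.mul_one] at this
  refine ⟨V, hV, ?_⟩
  rw [Matrix.mul_add, Matrix.add_mul, Matrix.mul_smul, Matrix.smul_mul, Matrix.mul_smul,
    Matrix.smul_mul, hVB, ← dg_const]
  refine le_trans ?_ (add_le_add (smul_le_smul_mat h7 h1t.le) le_rfl)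
  have h8 : (1 - t) • dg (fun i => (l ^ 2 * e i ^ (-(2 * t))) ^ w) + (t * (1 + r ^ 2)) • dg β =
      dg (fun i => (1 - t) * (l ^ 2 * e i ^ (-(2 * t))) ^ w + t * e i) := by
    ext i k
    by_cases hik : i = k
    · simp [dg, e, hik, mul_assoc]
    · simp [dg, hik]
  rw [h8]
  exact dg_le_dg fun i => scalar_young hl (he i) ht0 ht1

end Core

/-! ### The inequality for positive semidefinite matrices -/

section Final

lemma eigDesc_mono {m : Type} [Fintype m] [DecidableEq m] {H K : Matrix m m ℂ}
    (hH : H.IsHermitian) (hK : K.IsHermitian) (h : H ≤ K) {j : ℕ} (hj : 1 ≤ j)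
    (hjm : j ≤ Fintype.card m) : eigDesc H j ≤ eigDesc K j := by
  obtain ⟨κ, _, _, Y, hY, hcard, hc, -⟩ := exists_isometry_of_le_eigDesc hH hj hjm le_rfl
  exact le_eigDesc_of_isometry hK hj hjm Y hY hcard (hc.trans (conj_le_conj h Y))

lemma eigDesc_nonneg {m : Type} [Fintype m] [DecidableEq m] {H : Matrix m m ℂ}
    (hH : H.PosSemidef) {j : ℕ} (hj : 1 ≤ j) (hjm : j ≤ Fintype.card m) : 0 ≤ eigDesc H j := by
  refine le_eigDesc_of_isometry hH.1 hj hjm 1 (by simp) hjm ?_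
  simpa using Matrix.nonneg_iff_posSemidef.2 hH

/-- For `t ≤ 1/2` the squared second factor is the operator monotone power `B^{2t}`, which allows
`B` to be perturbed to a positive definite matrix. -/
lemma ando_half {m : Type} [Fintype m] [DecidableEq m] {A B : Matrix m m ℂ} (hA : A.PosSemidef)
    (hB : B.PosSemidef) {t : ℝ} (ht0 : 0 ≤ t) (ht1 : t ≤ 1 / 2) {j : ℕ} (hj : 1 ≤ j)
    (hjm : j ≤ Fintype.card m) :
    singDesc (A ^ (1 - t) * B ^ t) j ≤ eigDesc ((1 - t) • A + t • B) j := by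
  have h1t : 0 ≤ 1 - t := by linarith
  have hH : ((1 - t) • A + t • B).IsHermitian := ((hA.smul h1t).add (hB.smul ht0)).1
  obtain ⟨b₀, hb₀, hBb₀⟩ := exists_le_smul_one hB
  set l := singDesc (A ^ (1 - t) * B ^ t) j with hl
  have hl0 : 0 ≤ l := Real.sqrt_nonneg _
  have key : ∀ ε : ℝ, 0 < ε →
      l - t * (ε ^ 2 * b₀ + (1 + ε ^ 2) * ε) ≤ eigDesc ((1 - t) • A + t • B) j := by
    intro ε hε
    set B' := B + ε • (1 : Matrix m m ℂ) with hB'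
    have hBB' : B ≤ B' := by
      rw [hB', le_add_iff_nonneg_right]
      exact Matrix.nonneg_iff_posSemidef.2 (PosSemidef.one.smul hε.le)
    have hB'p : B'.PosDef := PosDef.posSemidef_add hB (PosDef.one.smul hε)
    have hl2 : l ^ 2 ≤
        eigDesc ((A ^ (1 - t) * B' ^ t)ᴴ * (A ^ (1 - t) * B' ^ t)) j := by
      have hsq : ∀ C : Matrix m m ℂ, C.PosSemidef →
          (C ^ t * A ^ (1 - t))ᴴ * (C ^ t * A ^ (1 - t)) =
            (A ^ (1 - t))ᴴ * C ^ (t * 2) * A ^ (1 - t) := by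
        intro C hC
        rw [← rpow_mul_self hC ht0, conjTranspose_mul, (rpow_isHermitian C t).eq]
        simp only [Matrix.mul_assoc]
      have hle : l ≤ singDesc (A ^ (1 - t) * B' ^ t) j := by
        rw [hl, singDesc_swap (rpow_isHermitian _ _) (rpow_isHermitian _ _),
          singDesc_swap (rpow_isHermitian A _) (rpow_isHermitian B' _)]
        refine Real.sqrt_le_sqrt (eigDesc_mono (isHermitian_conjTranspose_mul_self _)
          (isHermitian_conjTranspose_mul_self _) ?_ hj hjm)
        rw [hsq B hB, hsq B' hB'p.posSemidef]
        exact conj_le_conj (rpow_mono hBB' (by linarith) (by linarith)) _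
      calc l ^ 2 ≤ singDesc (A ^ (1 - t) * B' ^ t) j ^ 2 := by gcongr
        _ = _ := Real.sq_sqrt (eigDesc_nonneg (posSemidef_conjTranspose_mul_self _) hj hjm)
    obtain ⟨κ, _, _, Y, hY, hcard, -, hYl⟩ :=
      exists_isometry_of_le_eigDesc (isHermitian_conjTranspose_mul_self _) hj hjm hl2
    obtain ⟨V, hV, hVl⟩ := ando_core hA hB'p ht0 ht1 hε hl0 Y hY
      (hYl (posSemidef_conjTranspose_mul_self _))
    refine le_eigDesc_of_isometry hH hj hjm V hV hcard ?_
    have hle : (1 - t) • A + (t * (1 + ε ^ 2)) • B' ≤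
        ((1 - t) • A + t • B) +
          (t * (ε ^ 2 * b₀ + (1 + ε ^ 2) * ε)) • (1 : Matrix m m ℂ) := by
      have h := smul_le_smul_mat hBb₀ (c := t * ε ^ 2) (by positivity)
      have e1 : (1 - t) • A + (t * (1 + ε ^ 2)) • B' =
          ((1 - t) • A + t • B) + (t * (1 + ε ^ 2) * ε) • (1 : Matrix m m ℂ) +
            (t * ε ^ 2) • B := by
        rw [hB']; module
      have e2 : ((1 - t) • A + t • B) +
          (t * (ε ^ 2 * b₀ + (1 + ε ^ 2) * ε)) • (1 : Matrix m m ℂ) =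
          ((1 - t) • A + t • B) + (t * (1 + ε ^ 2) * ε) • (1 : Matrix m m ℂ) +
            (t * ε ^ 2) • b₀ • (1 : Matrix m m ℂ) := by
        module
      rw [e1, e2]
      exact add_le_add le_rfl h
    have h := hVl.trans (conj_le_conj hle V)
    rw [Matrix.mul_add Vᴴ, Matrix.add_mul, Matrix.mul_smul Vᴴ, Matrix.smul_mul, Matrix.mul_one,
      hV] at h
    rw [sub_smul, sub_le_iff_le_add]
    exact h
  have hlim : Filter.Tendsto (fun ε : ℝ => l - t * (ε ^ 2 * b₀ + (1 + ε ^ 2) * ε))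
      (nhdsWithin 0 (Set.Ioi 0)) (nhds l) := by
    have hc : Continuous (fun ε : ℝ => l - t * (ε ^ 2 * b₀ + (1 + ε ^ 2) * ε)) := by fun_prop
    have := (hc.tendsto 0).mono_left (nhdsWithin_le_nhds (s := Set.Ioi 0))
    simpa using this
  exact le_of_tendsto hlim (Filter.eventually_of_mem self_mem_nhdsWithin fun ε hε => key ε hε)

end Final

/-- Ando's inequality: for positive semidefinite `A, B` and `t ∈ [0,1]`,
`λ_j((1-t)A + tB) ≥ σ_j(A^{1-t} B^t)` for all `j`. -/
theorem stmt11 {n : ℕ} (A B : Matrix (Fin n) (Fin n) ℂ)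
    (hA : A.PosSemidef) (hB : B.PosSemidef) (t : ℝ) (ht0 : 0 ≤ t) (ht1 : t ≤ 1) :
    ∀ j : ℕ, 1 ≤ j → j ≤ n →
      singDesc (matPow A (1 - t) * matPow B t) j ≤ eigDesc ((1 - t) • A + t • B) j := by
  intro j hj hjn
  have hjm : j ≤ Fintype.card (Fin n) := by simpa using hjn
  rw [matPow_eq_rpow hA, matPow_eq_rpow hB]
  rcases le_total t (1 / 2) with h | h
  · exact ando_half hA hB ht0 h hj hjm
  -- Both sides are symmetric under exchanging `(A, 1 - t)` and `(B, t)`.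
  · rw [singDesc_swap (rpow_isHermitian _ _) (rpow_isHermitian _ _), add_comm]
    have := ando_half hB hA (t := 1 - t) (by linarith) (by linarith) hj hjm
    rwa [sub_sub_cancel] at this
end

section
/- Let A₁₁ and X be r×r complex positive definite matrices and let A₁₂ be an r×(n−r) complex matrix such that X(A₁₁² + A₁₂A₁₂*)X = I_r. Then the n×n Hermitian block matrix [[A₁₁ + X, A₁₂], [A₁₂*, A₁₂*A₁₁⁻¹A₁₂]] has, counting multiplicity, the same nonzero eigenvalues as the 2r×2r Hermitian block matrix [[A₁₁^{−1/2} X⁻² A₁₁^{−1/2}, A₁₁^{1/2} X^{1/2}], [X^{1/2} A₁₁^{1/2}, X]]. -/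
/-!
Write `a = A₁₁^{1/2}`, `b = A₁₁^{-1/2}`, `x = X^{1/2}`. With `F = [[a, x], [A₁₂ᴴ b, 0]]` and
`G = [[a, b A₁₂], [x, 0]]` (which is `Fᴴ`), the `n × n` matrix is `F * G` and the `2r × 2r` matrix
is `G * F`; the latter uses `A₁₁² + A₁₂ A₁₂ᴴ = X⁻²`, which is the hypothesis with the invertible `X`
moved to the other side. The products `F * G` and `G * F` have characteristic polynomials that
agree up to a power of the variable (`Matrix.charpoly_mul_comm'`), hence the same nonzero roots.
The identities between `a`, `b`, `x` come from the exponent law `matPow_mul_matPow`.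
-/

open Matrix
open scoped Classical ComplexOrder

theorem matPow_mul_matPow {n : Type*} [Fintype n] [DecidableEq n] {A : Matrix n n ℂ}
    (hA : A.PosDef) (s t : ℝ) : matPow A s * matPow A t = matPow A (s + t) := by
  have h := hA.posSemidef
  have hU : (h.1.eigenvectorUnitary : Matrix n n ℂ)ᴴ * (h.1.eigenvectorUnitary : Matrix n n ℂ) = 1 :=
    Unitary.coe_star_mul_self h.1.eigenvectorUnitary
  have hD : Matrix.diagonal (fun i => ((h.1.eigenvalues i ^ s : ℝ) : ℂ)) *
      Matrix.diagonal (fun i => ((h.1.eigenvalues i ^ t : ℝ) : ℂ)) =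
      Matrix.diagonal (fun i => ((h.1.eigenvalues i ^ (s + t) : ℝ) : ℂ)) := by
    rw [Matrix.diagonal_mul_diagonal]
    congr 1
    funext i
    rw [Real.rpow_add (hA.eigenvalues_pos i)]
    push_cast
    rfl
  simp only [matPow, dif_pos h]
  rw [← hD]
  simp only [Matrix.mul_assoc]
  rw [← Matrix.mul_assoc _ᴴ, hU, Matrix.one_mul]

theorem matPow_zero {n : Type*} [Fintype n] [DecidableEq n] {A : Matrix n n ℂ}
    (hA : A.PosSemidef) : matPow A 0 = 1 := by
  have hU : (hA.1.eigenvectorUnitary : Matrix n n ℂ) *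
      (hA.1.eigenvectorUnitary : Matrix n n ℂ)ᴴ = 1 :=
    Unitary.coe_mul_star_self hA.1.eigenvectorUnitary
  simp [matPow, dif_pos hA, hU]

theorem matPow_one {n : Type*} [Fintype n] [DecidableEq n] {A : Matrix n n ℂ}
    (hA : A.PosSemidef) : matPow A 1 = A := by
  simp only [matPow, dif_pos hA, Real.rpow_one]
  conv_rhs => rw [hA.1.spectral_theorem, Unitary.conjStarAlgAut_apply]
  rfl

/-- `M * N` and `N * M` have the same nonzero eigenvalues with multiplicity, for rectangular
`M` and `N`. -/
theorem filter_roots_charpoly_mul_comm {k l : Type*} [Fintype k] [DecidableEq k] [Fintype l]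
    [DecidableEq l] (M : Matrix k l ℂ) (N : Matrix l k ℂ) :
    Multiset.filter (fun x => x ≠ 0) (M * N).charpoly.roots =
      Multiset.filter (fun x => x ≠ 0) (N * M).charpoly.roots := by
  have h := congrArg (fun p => Multiset.filter (fun x => x ≠ 0) p.roots)
    (Matrix.charpoly_mul_comm' M N)
  have hz (j : ℕ) : Multiset.filter (fun x : ℂ => x ≠ 0) (j • {0}) = 0 := by
    rw [Multiset.filter_eq_nil]
    intro y hy
    simpa using Multiset.mem_of_mem_nsmul hy
  have hX (j : ℕ) (p : Polynomial ℂ) (hp : p.Monic) :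
      Multiset.filter (fun x => x ≠ 0) (Polynomial.X ^ j * p).roots =
        Multiset.filter (fun x => x ≠ 0) p.roots := by
    rw [Polynomial.roots_mul (mul_ne_zero (pow_ne_zero _ Polynomial.X_ne_zero) hp.ne_zero),
      Polynomial.roots_X_pow, Multiset.filter_add, hz, zero_add]
  simpa only [hX _ _ (Matrix.charpoly_monic _)] using h

/-- Under the hypotheses of Proposition 1, the `n × n` matrix
`[[A₁₁ + X, A₁₂], [A₁₂ᴴ, A₁₂ᴴ A₁₁⁻¹ A₁₂]]` has the same nonzero eigenvalues, counting
multiplicity, as the `2r × 2r` matrix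
`[[A₁₁^{-1/2} X⁻² A₁₁^{-1/2}, A₁₁^{1/2} X^{1/2}], [X^{1/2} A₁₁^{1/2}, X]]`. -/
theorem stmt18 {r m : ℕ} (A11 X : Matrix (Fin r) (Fin r) ℂ) (A12 : Matrix (Fin r) (Fin m) ℂ)
    (hA11 : A11.PosDef) (hX : X.PosDef)
    (hyp : X * (A11 ^ 2 + A12 * A12ᴴ) * X = 1) :
    Multiset.filter (fun x => x ≠ 0)
        (Matrix.fromBlocks (A11 + X) A12 A12ᴴ (A12ᴴ * A11⁻¹ * A12)).charpoly.roots =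
      Multiset.filter (fun x => x ≠ 0)
        (Matrix.fromBlocks (matPow A11 (-(1/2)) * (X ^ 2)⁻¹ * matPow A11 (-(1/2)))
          (matPow A11 (1/2) * matPow X (1/2))
          (matPow X (1/2) * matPow A11 (1/2)) X).charpoly.roots := by
  have haa : matPow A11 (1/2) * matPow A11 (1/2) = A11 := by
    rw [matPow_mul_matPow hA11, add_halves, matPow_one hA11.posSemidef]
  have hxx : matPow X (1/2) * matPow X (1/2) = X := by
    rw [matPow_mul_matPow hX, add_halves, matPow_one hX.posSemidef]
  have hab : matPow A11 (1/2) * matPow A11 (-(1/2)) = 1 := by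
    rw [matPow_mul_matPow hA11, add_neg_cancel, matPow_zero hA11.posSemidef]
  have hba : matPow A11 (-(1/2)) * matPow A11 (1/2) = 1 := mul_eq_one_comm.mp hab
  generalize matPow A11 (1/2) = a at *
  generalize matPow A11 (-(1/2)) = b at *
  generalize matPow X (1/2) = x at *
  have hbb : A11⁻¹ = b * b := by
    apply Matrix.inv_eq_right_inv
    rw [← haa, Matrix.mul_assoc, ← Matrix.mul_assoc a b b, hab, Matrix.one_mul, hab]
  have hXX : (X ^ 2)⁻¹ = A11 ^ 2 + A12 * A12ᴴ := by
    apply Matrix.inv_eq_right_inv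
    rw [pow_two, Matrix.mul_assoc]
    -- the hypothesis says that `X * (A11 ^ 2 + A12 * A12ᴴ)` is a left inverse of `X`
    exact mul_eq_one_comm.mp hyp
  have hFG : Matrix.fromBlocks (A11 + X) A12 A12ᴴ (A12ᴴ * A11⁻¹ * A12) =
      Matrix.fromBlocks a x (A12ᴴ * b) 0 * Matrix.fromBlocks a (b * A12) x 0 := by
    rw [Matrix.fromBlocks_multiply, haa, hxx, hbb, ← Matrix.mul_assoc a b, hab,
      Matrix.mul_assoc A12ᴴ b a, hba]
    simp [Matrix.mul_assoc]
  have hb : b * (A11 ^ 2 + A12 * A12ᴴ) * b = a * a + b * A12 * (A12ᴴ * b) := by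
    have h1 : b * A11 = a := by rw [← haa, ← Matrix.mul_assoc, hba, Matrix.one_mul]
    have h2 : A11 * b = a := by rw [← haa, Matrix.mul_assoc, hab, Matrix.mul_one]
    rw [Matrix.mul_add, Matrix.add_mul, pow_two, ← Matrix.mul_assoc b A11, h1,
      Matrix.mul_assoc a A11, h2]
    simp only [Matrix.mul_assoc]
  have hGF : Matrix.fromBlocks (b * (X ^ 2)⁻¹ * b) (a * x) (x * a) X =
      Matrix.fromBlocks a (b * A12) x 0 * Matrix.fromBlocks a x (A12ᴴ * b) 0 := by
    rw [Matrix.fromBlocks_multiply, hXX, hb, hxx]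
    simp
  rw [hFG, hGF]
  convert filter_roots_charpoly_mul_comm _ _
end
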